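/- The following statements are equivalent for an integral domain R: (1) R is a generalized Krull domain, i.e., there is a set 𝒫 of height-one prime ideals of R such that R_P is a valuation domain for each P ∈ 𝒫, R = ⋂_{P∈𝒫} R_P inside the quotient field, and every nonzero element of R lies in only finitely many members of 𝒫; (2) R is a t-potent essential domain of t-dimension one; (3) R is a t-potent Prüfer v-multiplication domain of t-dimension one; (4) R is a completely integrally closed t-super potent domain; (5) R is a t-super potent domain of t-dimension one. -/

import Mathlib

open FractionalIdeal

/-- The fractional ideals of `R` inside its field of fractions. -/
abbrev FracId (R : Type*) [CommRing R] : Type _ :=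
  FractionalIdeal (nonZeroDivisors R) (FractionRing R)

/-- A star operation on an integral domain `R`: a map on nonzero fractional ideals satisfying
`(cA)⋆ = c·A⋆`, `R⋆ = R`, `A ⊆ A⋆`, monotonicity, and idempotence.  (The value on the zero
ideal is irrelevant.) -/
structure StarOp (R : Type*) [CommRing R] [IsDomain R] where
  star : FracId R → FracId R
  star_smul : ∀ c : FractionRing R, c ≠ 0 → ∀ I : FracId R, I ≠ 0 →
    star (spanSingleton (nonZeroDivisors R) c * I) = spanSingleton (nonZeroDivisors R) c * star I
  star_one : star 1 = 1
  le_star : ∀ I : FracId R, I ≠ 0 → I ≤ star I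
  star_mono : ∀ I J : FracId R, I ≠ 0 → J ≠ 0 → I ≤ J → star I ≤ star J
  star_idem : ∀ I : FracId R, I ≠ 0 → star (star I) = star I

namespace StarOp

variable {R : Type*} [CommRing R] [IsDomain R]

/-- A star operation has finite type if `A⋆` is the union of `J⋆` over the nonzero finitely
generated (fractional) subideals `J` of `A`. -/
def FiniteType (s : StarOp R) : Prop :=
  ∀ I : FracId R, I ≠ 0 → ∀ x : FractionRing R, (x ∈ s.star I ↔
    ∃ J : FracId R, J ≠ 0 ∧ (J : Submodule R (FractionRing R)).FG ∧ J ≤ I ∧ x ∈ s.star J)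

/-- `⋆₁ ≤ ⋆₂` : `I^⋆₁ ⊆ I^⋆₂` for every nonzero fractional ideal `I`. -/
def le (s₁ s₂ : StarOp R) : Prop := ∀ I : FracId R, I ≠ 0 → s₁.star I ≤ s₂.star I

/-- A (nonzero integral) `⋆`-ideal: an ideal with `I⋆ = I`. -/
def IsStarIdeal (s : StarOp R) (I : Ideal R) : Prop :=
  I ≠ ⊥ ∧ s.star (I : FracId R) = (I : FracId R)

/-- A maximal `⋆`-ideal: maximal among proper integral `⋆`-ideals. -/
def IsMaxStarIdeal (s : StarOp R) (M : Ideal R) : Prop :=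
  M ≠ ⊤ ∧ s.IsStarIdeal M ∧ ∀ J : Ideal R, J ≠ ⊤ → s.IsStarIdeal J → M ≤ J → J = M

/-- A nonzero ideal `I` is `⋆`-invertible if `(I·I⁻¹)⋆ = R`. -/
def IsStarInvertible (s : StarOp R) (I : Ideal R) : Prop :=
  I ≠ ⊥ ∧ s.star ((I : FracId R) * ((1 : FracId R) / (I : FracId R))) = 1

/-- A nonzero finitely generated ideal is `⋆`-rigid if it is contained in exactly one maximal
`⋆`-ideal. -/
def IsRigid (s : StarOp R) (I : Ideal R) : Prop :=
  I ≠ ⊥ ∧ I.FG ∧ ∃! M : Ideal R, s.IsMaxStarIdeal M ∧ I ≤ M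

/-- A `⋆`-rigid ideal is `⋆`-super rigid if every finitely generated ideal containing it is
`⋆`-invertible. -/
def IsSuperRigid (s : StarOp R) (I : Ideal R) : Prop :=
  s.IsRigid I ∧ ∀ J : Ideal R, J.FG → I ≤ J → s.IsStarInvertible J

/-- A maximal `⋆`-ideal is `⋆`-potent if it contains a `⋆`-rigid ideal. -/
def IsPotent (s : StarOp R) (M : Ideal R) : Prop :=
  s.IsMaxStarIdeal M ∧ ∃ I : Ideal R, s.IsRigid I ∧ I ≤ M

/-- A maximal `⋆`-ideal is `⋆`-super potent if it contains a `⋆`-super rigid ideal. -/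
def IsSuperPotent (s : StarOp R) (M : Ideal R) : Prop :=
  s.IsMaxStarIdeal M ∧ ∃ I : Ideal R, s.IsSuperRigid I ∧ I ≤ M

/-- `R` is `⋆`-potent if every maximal `⋆`-ideal is `⋆`-potent. -/
def PotentDomain (s : StarOp R) : Prop :=
  ∀ M : Ideal R, s.IsMaxStarIdeal M → s.IsPotent M

/-- `R` is `⋆`-super potent if every maximal `⋆`-ideal is `⋆`-super potent. -/
def SuperPotentDomain (s : StarOp R) : Prop :=
  ∀ M : Ideal R, s.IsMaxStarIdeal M → s.IsSuperPotent M

end StarOp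

section TOperation

variable {R : Type*} [CommRing R] [IsDomain R]

/-- The `v`-operation `J ↦ (J⁻¹)⁻¹` on fractional ideals. -/
noncomputable def vOp (J : FracId R) : FracId R :=
  (1 : FracId R) / ((1 : FracId R) / J)

/-- The `t`-closure of a fractional ideal: the union of `J^v` over all nonzero finitely
generated subideals `J` (realized as a submodule of the fraction field). -/
noncomputable def tOp (I : FracId R) : Submodule R (FractionRing R) :=
  ⨆ J ∈ {J : FracId R | J ≠ 0 ∧ (J : Submodule R (FractionRing R)).FG ∧ J ≤ I},
    ((vOp J : FracId R) : Submodule R (FractionRing R))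

/-- A (nonzero integral) `t`-ideal. -/
def IsTIdeal (I : Ideal R) : Prop :=
  I ≠ ⊥ ∧ tOp (I : FracId R) = ((I : FracId R) : Submodule R (FractionRing R))

/-- A maximal `t`-ideal: maximal among proper integral `t`-ideals. -/
def IsMaxTIdeal (M : Ideal R) : Prop :=
  M ≠ ⊤ ∧ IsTIdeal M ∧ ∀ J : Ideal R, J ≠ ⊤ → IsTIdeal J → M ≤ J → J = M

/-- A nonzero ideal `I` is `t`-invertible if `(I·I⁻¹)^t = R`. -/
def IsTInvertible (I : Ideal R) : Prop :=
  I ≠ ⊥ ∧ tOp ((I : FracId R) * ((1 : FracId R) / (I : FracId R))) =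
    ((1 : FracId R) : Submodule R (FractionRing R))

/-- A nonzero finitely generated ideal is `t`-rigid if it is contained in exactly one maximal
`t`-ideal. -/
def IsTRigid (I : Ideal R) : Prop :=
  I ≠ ⊥ ∧ I.FG ∧ ∃! M : Ideal R, IsMaxTIdeal M ∧ I ≤ M

/-- A `t`-rigid ideal is `t`-super rigid if every finitely generated ideal containing it is
`t`-invertible. -/
def IsTSuperRigid (I : Ideal R) : Prop :=
  IsTRigid I ∧ ∀ J : Ideal R, J.FG → I ≤ J → IsTInvertible J

/-- A maximal `t`-ideal is `t`-potent if it contains a `t`-rigid ideal. -/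
def IsTPotent (M : Ideal R) : Prop :=
  IsMaxTIdeal M ∧ ∃ I : Ideal R, IsTRigid I ∧ I ≤ M

/-- A maximal `t`-ideal is `t`-super potent if it contains a `t`-super rigid ideal. -/
def IsTSuperPotent (M : Ideal R) : Prop :=
  IsMaxTIdeal M ∧ ∃ I : Ideal R, IsTSuperRigid I ∧ I ≤ M

end TOperation

/-- `R` is `t`-potent if every maximal `t`-ideal is `t`-potent. -/
def TPotentDomain (R : Type*) [CommRing R] [IsDomain R] : Prop :=
  ∀ M : Ideal R, IsMaxTIdeal M → IsTPotent M

/-- `R` is `t`-super potent if every maximal `t`-ideal is `t`-super potent. -/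
def TSuperPotentDomain (R : Type*) [CommRing R] [IsDomain R] : Prop :=
  ∀ M : Ideal R, IsMaxTIdeal M → IsTSuperPotent M

/-- An ideal is invertible if `I·I⁻¹ = R` (as fractional ideals). -/
def IsInvertibleIdeal {R : Type*} [CommRing R] [IsDomain R] (I : Ideal R) : Prop :=
  I ≠ ⊥ ∧ (I : FracId R) * ((1 : FracId R) / (I : FracId R)) = 1

/-- An ideal `M` is `d`-super potent if it contains a nonzero finitely generated ideal `I`
such that every finitely generated ideal containing `I` is invertible. -/
def IsDSuperPotent {R : Type*} [CommRing R] [IsDomain R] (M : Ideal R) : Prop :=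
  ∃ I : Ideal R, I ≠ ⊥ ∧ I.FG ∧ I ≤ M ∧ ∀ J : Ideal R, J.FG → I ≤ J → IsInvertibleIdeal J

/-- An ideal `P` is divided (`P = P R_P`): every `x ∈ P` is divisible, within `P`, by every
`s ∉ P`. -/
def IsDividedIdeal {R : Type*} [CommRing R] (P : Ideal R) : Prop :=
  ∀ x ∈ P, ∀ s ∉ P, ∃ y ∈ P, x = s * y

/-- A divided prime ideal. -/
def IsDividedPrime {R : Type*} [CommRing R] (P : Ideal R) : Prop :=
  P.IsPrime ∧ IsDividedIdeal P

/-- A valuation domain: an integral domain in which, for any two elements, one divides the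
other (equivalently, the ideals are totally ordered by inclusion). -/
def IsValuationDomain (A : Type*) [CommRing A] : Prop :=
  IsDomain A ∧ ∀ a b : A, a ∣ b ∨ b ∣ a

/-- A height-one prime: a nonzero prime ideal such that the only prime strictly below it
is `(0)`. -/
def HeightOnePrime {R : Type*} [CommRing R] (P : Ideal R) : Prop :=
  P.IsPrime ∧ P ≠ ⊥ ∧ ∀ Q : Ideal R, Q.IsPrime → Q < P → Q = ⊥

/-- `R` has `t`-dimension one: every maximal `t`-ideal has height one. -/
def TDimensionOne (R : Type*) [CommRing R] [IsDomain R] : Prop :=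
  ∀ M : Ideal R, IsMaxTIdeal M → HeightOnePrime M

/-- `R` is completely integrally closed: if `a ∈ R` is nonzero, `u` is in the fraction field,
and `a·uⁿ ∈ R` for all `n ≥ 1`, then `u ∈ R`. -/
def CompletelyIntegrallyClosed (R : Type*) [CommRing R] [IsDomain R] : Prop :=
  ∀ (a : R) (u : FractionRing R), a ≠ 0 →
    (∀ n : ℕ, 0 < n → ∃ r : R, algebraMap R (FractionRing R) a * u ^ n =
      algebraMap R (FractionRing R) r) →
    ∃ r : R, algebraMap R (FractionRing R) r = u

/-- A Prüfer `v`-multiplication domain: every nonzero finitely generated ideal is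
`t`-invertible. -/
def IsPvMD (R : Type*) [CommRing R] [IsDomain R] : Prop :=
  ∀ I : Ideal R, I ≠ ⊥ → I.FG → IsTInvertible I

/-- `x` (in the fraction field) belongs to the localization `R_P`, i.e. `x = r/s` with
`s ∉ P`. -/
def MemLocalizationAt {R : Type*} [CommRing R] [IsDomain R] (P : Ideal R)
    (x : FractionRing R) : Prop :=
  ∃ r s : R, s ∉ P ∧ algebraMap R (FractionRing R) s * x = algebraMap R (FractionRing R) r

/-- An essential domain: `R` is an intersection (inside its fraction field) of localizations
at primes which are valuation domains. -/
def EssentialDomain (R : Type*) [CommRing R] [IsDomain R] : Prop :=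
  ∃ 𝓟 : Set (Ideal R),
    (∀ P ∈ 𝓟, ∃ hP : P.IsPrime,
      IsValuationDomain (Localization (@Ideal.primeCompl R _ P hP))) ∧
    (∀ x : FractionRing R, (∀ P ∈ 𝓟, MemLocalizationAt P x) ↔
      ∃ r : R, algebraMap R (FractionRing R) r = x)

/-- A generalized Krull domain: `R` is a locally finite intersection of essential rank-one
(height-one) valuation localizations. -/
def GeneralizedKrullDomain (R : Type*) [CommRing R] [IsDomain R] : Prop :=
  ∃ 𝓟 : Set (Ideal R),
    (∀ P ∈ 𝓟, ∃ hP : P.IsPrime, HeightOnePrime P ∧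
      IsValuationDomain (Localization (@Ideal.primeCompl R _ P hP))) ∧
    (∀ x : FractionRing R, (∀ P ∈ 𝓟, MemLocalizationAt P x) ↔
      ∃ r : R, algebraMap R (FractionRing R) r = x) ∧
    (∀ a : R, a ≠ 0 → {P : Ideal R | P ∈ 𝓟 ∧ a ∈ P}.Finite)


section Closure

variable {R : Type*} [CommRing R]

/-- `MemIntegral y` says that an element `y` of the fraction field lies in `R`. -/
def MemIntegral (y : FractionRing R) : Prop := y ∈ (algebraMap R (FractionRing R)).range

/-- `y` belongs to the inverse `J⁻¹` of the ideal `J`. -/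
def MemInverse (J : Ideal R) (y : FractionRing R) : Prop :=
  ∀ j ∈ J, MemIntegral (y * algebraMap R (FractionRing R) j)

/-- The ideal `J` has trivial inverse: `J⁻¹ = R`. -/
def HasTrivialInverse (J : Ideal R) : Prop :=
  ∀ y : FractionRing R, MemInverse J y → MemIntegral y

/-- The ideal `I` contains no finitely generated ideal with trivial inverse. -/
def IsTProper (I : Ideal R) : Prop :=
  ∀ J ≤ I, J.FG → ¬ HasTrivialInverse J

theorem memIntegral_algebraMap (r : R) : MemIntegral (algebraMap R (FractionRing R) r) :=
  ⟨r, rfl⟩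

theorem MemIntegral.mul {x y : FractionRing R} (hx : MemIntegral x) (hy : MemIntegral y) :
    MemIntegral (x * y) :=
  Subring.mul_mem _ hx hy

theorem MemIntegral.add {x y : FractionRing R} (hx : MemIntegral x) (hy : MemIntegral y) :
    MemIntegral (x + y) :=
  Subring.add_mem _ hx hy

theorem mem_one_iff_memIntegral {x : FractionRing R} : x ∈ (1 : FracId R) ↔ MemIntegral x :=
  FractionalIdeal.mem_one_iff _

theorem MemInverse.mono {I J : Ideal R} (h : I ≤ J) {y : FractionRing R} (hy : MemInverse J y) :
    MemInverse I y :=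
  fun j hj => hy j (h hj)

theorem HasTrivialInverse.mono {I J : Ideal R} (h : I ≤ J) (hI : HasTrivialInverse I) :
    HasTrivialInverse J :=
  fun y hy => hI y (hy.mono h)

theorem HasTrivialInverse.mul {I J : Ideal R} (hI : HasTrivialInverse I)
    (hJ : HasTrivialInverse J) : HasTrivialInverse (I * J) := by
  intro y hy
  refine hI y fun i hi => hJ _ fun j hj => ?_
  rw [mul_assoc, ← map_mul]
  exact hy _ (Ideal.mul_mem_mul hi hj)

theorem hasTrivialInverse_top : HasTrivialInverse (⊤ : Ideal R) := by
  intro y hy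
  simpa using hy 1 trivial

theorem IsTProper.ne_top {I : Ideal R} (hI : IsTProper I) : I ≠ ⊤ := by
  rintro rfl
  exact hI ⊤ le_rfl ⟨{1}, by simp⟩ hasTrivialInverse_top

theorem memInverse_sup {I J : Ideal R} {y : FractionRing R} (hI : MemInverse I y)
    (hJ : MemInverse J y) : MemInverse (I ⊔ J) y := by
  intro j hj
  obtain ⟨a, ha, b, hb, rfl⟩ := Submodule.mem_sup.1 hj
  rw [map_add, mul_add]
  exact (hI a ha).add (hJ b hb)

theorem memInverse_span_singleton {a : R} {y : FractionRing R}
    (h : MemIntegral (y * algebraMap R (FractionRing R) a)) : MemInverse (Ideal.span {a}) y := by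
  intro j hj
  obtain ⟨c, rfl⟩ := Ideal.mem_span_singleton'.1 hj
  rw [map_mul, mul_left_comm]
  exact (memIntegral_algebraMap c).mul h

theorem IsTProper.exists_le_maximal {I : Ideal R} (hI : IsTProper I) :
    ∃ M, I ≤ M ∧ Maximal IsTProper M := by
  refine zorn_le_nonempty₀ {I : Ideal R | IsTProper I} (fun c hc hchain J hJ => ?_) I hI
  refine ⟨sSup c, fun L hL hfg => ?_, fun z hz => le_sSup hz⟩
  obtain ⟨N, hN, hLN⟩ := (CompleteLattice.isCompactElement_iff_le_of_directed_sSup_le _ L).1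
    ((Submodule.fg_iff_compact L).1 hfg) c ⟨J, hJ⟩ hchain.directedOn hL
  exact hc hN L hLN hfg

/-- A finitely generated subideal of `M + (r)` is contained in `J + (r)` for some finitely
generated `J ≤ M`. -/
theorem Ideal.FG.exists_le_sup_span_singleton {L M : Ideal R} {r : R}
    (hL : L.FG) (h : L ≤ M ⊔ Ideal.span {r}) : ∃ J ≤ M, J.FG ∧ L ≤ J ⊔ Ideal.span {r} := by
  induction L, hL using Submodule.fg_induction with
  | singleton x =>
    obtain ⟨m, hm, b, hb, hx⟩ := Submodule.mem_sup.1 (h (Submodule.mem_span_singleton_self x))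
    refine ⟨Ideal.span {m}, (Ideal.span_singleton_le_iff_mem _).2 hm, ⟨{m}, by simp⟩, ?_⟩
    rw [Submodule.span_singleton_le_iff_mem, ← hx]
    exact Submodule.add_mem_sup (Ideal.mem_span_singleton_self m) hb
  | sup L₁ L₂ _ _ h₁ h₂ =>
    obtain ⟨J₁, a1, a2, a3⟩ := h₁ (le_sup_left.trans h)
    obtain ⟨J₂, b1, b2, b3⟩ := h₂ (le_sup_right.trans h)
    exact ⟨J₁ ⊔ J₂, sup_le a1 b1, Submodule.FG.sup a2 b2,
      sup_le (a3.trans (sup_le_sup_right le_sup_left _))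
        (b3.trans (sup_le_sup_right le_sup_right _))⟩

variable [IsDomain R]

theorem mem_one_div_iff {I : Ideal R} (hI : I ≠ ⊥) {y : FractionRing R} :
    y ∈ (1 : FracId R) / (I : FracId R) ↔ MemInverse I y := by
  rw [mem_div_iff_of_ne_zero (coeIdeal_ne_zero.2 hI)]
  constructor
  · exact fun h j hj => mem_one_iff_memIntegral.1 (h _ (mem_coeIdeal_of_mem _ hj))
  · intro h z hz
    obtain ⟨j, hj, rfl⟩ := (mem_coeIdeal _).1 hz
    exact mem_one_iff_memIntegral.2 (h j hj)

theorem mem_vOp_iff {J : Ideal R} (hJ : J ≠ ⊥) {x : FractionRing R} :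
    x ∈ vOp (J : FracId R) ↔ ∀ y, MemInverse J y → MemIntegral (x * y) := by
  have h1 : (1 : FractionRing R) ∈ (1 : FracId R) / (J : FracId R) :=
    (mem_one_div_iff hJ).2 fun j _ => by rw [one_mul]; exact memIntegral_algebraMap j
  have h0 : (1 : FracId R) / (J : FracId R) ≠ 0 := by
    intro h
    rw [h] at h1
    exact one_ne_zero ((mem_zero_iff _).1 h1)
  rw [vOp, mem_div_iff_of_ne_zero h0]
  simp only [mem_one_div_iff hJ, mem_one_iff_memIntegral]

theorem mem_tOp_iff {I : Ideal R} (hI : I ≠ ⊥) {x : FractionRing R} :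
    x ∈ tOp (I : FracId R) ↔
      ∃ J ≤ I, J ≠ ⊥ ∧ J.FG ∧ ∀ y, MemInverse J y → MemIntegral (x * y) := by
  have inj := IsFractionRing.injective R (FractionRing R)
  have key : ∀ J : FracId R, (J ≠ 0 ∧ (J : Submodule R (FractionRing R)).FG ∧ J ≤ I) →
      ∃ J' : Ideal R, (J' : FracId R) = J ∧ J' ≤ I ∧ J' ≠ ⊥ ∧ J'.FG := by
    rintro J ⟨h0, hfg, hle⟩
    obtain ⟨J', rfl⟩ := le_one_iff_exists_coeIdeal.1 (hle.trans coeIdeal_le_one)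
    exact ⟨J', rfl, (coeIdeal_le_coeIdeal _).1 hle, coeIdeal_ne_zero.1 h0,
      (coeIdeal_fg _ inj _).1 hfg⟩
  have key' : ∀ J' : Ideal R, J' ≤ I → J' ≠ ⊥ → J'.FG →
      ((J' : FracId R) ≠ 0 ∧ ((J' : FracId R) : Submodule R (FractionRing R)).FG ∧
        (J' : FracId R) ≤ I) := fun J' h1 h2 h3 =>
    ⟨coeIdeal_ne_zero.2 h2, (coeIdeal_fg _ inj _).2 h3, (coeIdeal_le_coeIdeal _).2 h1⟩
  obtain ⟨a, ha, ha0⟩ := Submodule.exists_mem_ne_zero_of_ne_bot hI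
  rw [tOp, iSup_subtype']
  have : Nonempty {J : FracId R // J ∈ {J : FracId R |
      J ≠ 0 ∧ (J : Submodule R (FractionRing R)).FG ∧ J ≤ I}} :=
    ⟨⟨(Ideal.span {a} : Ideal R), key' _ ((Ideal.span_singleton_le_iff_mem _).2 ha)
      (by simpa using ha0) ⟨{a}, by simp⟩⟩⟩
  rw [Submodule.mem_iSup_of_directed]
  · constructor
    · rintro ⟨⟨J, hJ⟩, hx⟩
      obtain ⟨J', rfl, h1, h2, h3⟩ := key J hJ
      exact ⟨J', h1, h2, h3, (mem_vOp_iff h2).1 hx⟩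
    · rintro ⟨J', h1, h2, h3, hx⟩
      exact ⟨⟨J', key' J' h1 h2 h3⟩, (mem_vOp_iff h2).2 hx⟩
  · rintro ⟨J₁, hJ₁⟩ ⟨J₂, hJ₂⟩
    obtain ⟨J₁, rfl, a1, a2, a3⟩ := key J₁ hJ₁
    obtain ⟨J₂, rfl, b1, b2, b3⟩ := key J₂ hJ₂
    have hne : J₁ ⊔ J₂ ≠ ⊥ := fun h => a2 (eq_bot_iff.2 (h ▸ le_sup_left))
    refine ⟨⟨(J₁ ⊔ J₂ : Ideal R), key' _ (sup_le a1 b1) hne (Submodule.FG.sup a3 b3)⟩, fun x hx => ?_,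
      fun x hx => ?_⟩
    · exact (mem_vOp_iff hne).2 fun y hy => (mem_vOp_iff a2).1 hx y (hy.mono le_sup_left)
    · exact (mem_vOp_iff hne).2 fun y hy => (mem_vOp_iff b2).1 hx y (hy.mono le_sup_right)

theorem isTIdeal_iff {I : Ideal R} :
    IsTIdeal I ↔ I ≠ ⊥ ∧ ∀ J ≤ I, J ≠ ⊥ → J.FG → ∀ r : R,
      (∀ y, MemInverse J y → MemIntegral (algebraMap R (FractionRing R) r * y)) → r ∈ I := by
  refine and_congr_right fun hI => ⟨fun h J hJ h0 hfg r hr => ?_, fun h => le_antisymm ?_ ?_⟩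
  · have := (mem_tOp_iff hI).2 ⟨J, hJ, h0, hfg, hr⟩
    rw [h] at this
    obtain ⟨r', hr', he⟩ := (mem_coeIdeal _).1 (mem_coe.1 this)
    rwa [← IsFractionRing.injective R (FractionRing R) he]
  · intro x hx
    obtain ⟨J, hJ, h0, hfg, hx⟩ := (mem_tOp_iff hI).1 hx
    obtain ⟨r, rfl⟩ : MemIntegral x := by
      simpa using hx 1 fun j _ => by rw [one_mul]; exact memIntegral_algebraMap j
    exact mem_coeIdeal_of_mem _ (h J hJ h0 hfg r hx)
  · intro x hx
    obtain ⟨r, hr, rfl⟩ := (mem_coeIdeal _).1 (mem_coe.1 hx)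
    by_cases h0 : r = 0
    · subst h0
      rw [map_zero]
      exact Submodule.zero_mem _
    refine (mem_tOp_iff hI).2 ⟨Ideal.span {r}, (Ideal.span_singleton_le_iff_mem _).2 hr,
      by simpa using h0, ⟨{r}, by simp⟩, fun y hy => ?_⟩
    rw [mul_comm]
    exact hy r (Ideal.mem_span_singleton_self r)

theorem IsTIdeal.isTProper {I : Ideal R} (hI : IsTIdeal I) (h : I ≠ ⊤) : IsTProper I := by
  intro J hJ hfg htriv
  obtain ⟨h0, hI⟩ := isTIdeal_iff.1 hI
  obtain ⟨a, ha, ha0⟩ := Submodule.exists_mem_ne_zero_of_ne_bot h0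
  refine h ((Ideal.eq_top_iff_one _).2
    (hI (J ⊔ Ideal.span {a}) (sup_le hJ ((Ideal.span_singleton_le_iff_mem _).2 ha)) ?_
      (Submodule.FG.sup hfg ⟨{a}, by simp⟩) 1 fun y hy => ?_))
  · intro h
    exact ha0 (by simpa using (h ▸ le_sup_right : Ideal.span {a} ≤ ⊥))
  · rw [map_one, one_mul]
    exact htriv y (hy.mono le_sup_left)

theorem isMaxTIdeal_iff {M : Ideal R} : IsMaxTIdeal M ↔ M ≠ ⊥ ∧ Maximal IsTProper M := by
  have main : ∀ M : Ideal R, M ≠ ⊥ → Maximal IsTProper M → IsMaxTIdeal M := by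
    intro M h0 hM
    refine ⟨hM.prop.ne_top, isTIdeal_iff.2 ⟨h0, fun J hJ hJ0 hfg r hr => ?_⟩, ?_⟩
    · refine (Ideal.span_singleton_le_iff_mem _).1 (le_sup_right.trans
        (hM.le_of_ge (y := M ⊔ Ideal.span {r}) (fun L hL hLfg htriv => ?_) le_sup_left))
      obtain ⟨J', hJ', hfg', hle⟩ := hLfg.exists_le_sup_span_singleton hL
      refine hM.prop (J ⊔ J') (sup_le hJ hJ') (Submodule.FG.sup hfg hfg') fun y hy => htriv y ?_
      refine MemInverse.mono hle (memInverse_sup (hy.mono le_sup_right)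
        (memInverse_span_singleton ?_))
      rw [mul_comm]
      exact hr y (hy.mono le_sup_left)
    · intro J hJ hJt hMJ
      exact le_antisymm (hM.le_of_ge (hJt.isTProper hJ) hMJ) hMJ
  refine ⟨fun h => ⟨h.2.1.1, ?_⟩, fun h => main M h.1 h.2⟩
  obtain ⟨N, hMN, hN⟩ := (h.2.1.isTProper h.1).exists_le_maximal
  have hN0 : N ≠ ⊥ := fun h' => h.2.1.1 (eq_bot_iff.2 (h' ▸ hMN))
  have := main N hN0 hN
  rwa [← h.2.2 N this.1 this.2.1 hMN]

theorem IsMaxTIdeal.isTProper {M : Ideal R} (hM : IsMaxTIdeal M) : IsTProper M :=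
  (isMaxTIdeal_iff.1 hM).2.prop

theorem IsMaxTIdeal.ne_bot {M : Ideal R} (hM : IsMaxTIdeal M) : M ≠ ⊥ :=
  hM.2.1.1

theorem IsMaxTIdeal.eq_of_le {M I : Ideal R} (hM : IsMaxTIdeal M) (hI : IsTProper I)
    (h : M ≤ I) : M = I :=
  (isMaxTIdeal_iff.1 hM).2.eq_of_le hI h

theorem IsTProper.exists_le_isMaxTIdeal {I : Ideal R} (hI : IsTProper I) (h0 : I ≠ ⊥) :
    ∃ M, IsMaxTIdeal M ∧ I ≤ M := by
  obtain ⟨M, hIM, hM⟩ := hI.exists_le_maximal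
  exact ⟨M, isMaxTIdeal_iff.2 ⟨fun h => h0 (eq_bot_iff.2 (h ▸ hIM)), hM⟩, hIM⟩

theorem exists_hasTrivialInverse_of_forall_not_le {I : Ideal R} (h0 : I ≠ ⊥)
    (h : ∀ M, IsMaxTIdeal M → ¬ I ≤ M) : ∃ J ≤ I, J.FG ∧ HasTrivialInverse J := by
  by_contra! hc
  obtain ⟨M, hM, hIM⟩ := IsTProper.exists_le_isMaxTIdeal hc h0
  exact h M hM hIM

theorem IsMaxTIdeal.isPrime {M : Ideal R} (hM : IsMaxTIdeal M) : M.IsPrime := by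
  have key : ∀ a ∉ M, ∃ J ≤ M, J.FG ∧ HasTrivialInverse (J ⊔ Ideal.span {a}) := by
    intro a ha
    have : ¬ IsTProper (M ⊔ Ideal.span {a}) := fun h => ha <| by
      rw [hM.eq_of_le h le_sup_left]
      exact (le_sup_right : Ideal.span {a} ≤ _) (Ideal.mem_span_singleton_self a)
    simp only [IsTProper, not_forall, not_not] at this
    obtain ⟨L, hL, hfg, htriv⟩ := this
    obtain ⟨J, hJ, hJfg, hle⟩ := hfg.exists_le_sup_span_singleton hL
    exact ⟨J, hJ, hJfg, htriv.mono hle⟩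
  refine ⟨hM.1, fun {a b} hab => ?_⟩
  by_contra! h
  obtain ⟨J₁, a1, a2, a3⟩ := key a h.1
  obtain ⟨J₂, b1, b2, b3⟩ := key b h.2
  refine hM.isTProper _ ?_ (Submodule.FG.mul (Submodule.FG.sup a2 ⟨{a}, by simp⟩) (Submodule.FG.sup b2 ⟨{b}, by simp⟩)) (a3.mul b3)
  rw [Ideal.sup_mul, Ideal.mul_sup, Ideal.mul_sup, Ideal.span_singleton_mul_span_singleton]
  exact sup_le (sup_le (Ideal.mul_le_left.trans a1) (Ideal.mul_le_left.trans a1))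
    (sup_le (Ideal.mul_le_right.trans b1) ((Ideal.span_singleton_le_iff_mem _).2 hab))

theorem isTInvertible_iff {I : Ideal R} (hI : I ≠ ⊥) :
    IsTInvertible I ↔ ∀ M, IsMaxTIdeal M → ∃ y, MemInverse I y ∧ ∃ i ∈ I, ∃ r ∉ M,
      y * algebraMap R (FractionRing R) i = algebraMap R (FractionRing R) r := by
  obtain ⟨C, hC⟩ := le_one_iff_exists_coeIdeal.1 (mul_one_div_le_one (I := (I : FracId R)))
  have hIC : I ≤ C := by
    rw [← coeIdeal_le_coeIdeal (FractionRing R), hC]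
    exact le_self_mul_one_div coeIdeal_le_one
  have hC0 : C ≠ ⊥ := fun h => hI (eq_bot_iff.2 (h ▸ hIC))
  have hCM : ∀ M : Ideal R, ¬ C ≤ M ↔ ∃ y, MemInverse I y ∧ ∃ i ∈ I, ∃ r ∉ M,
      y * algebraMap R (FractionRing R) i = algebraMap R (FractionRing R) r := by
    intro M
    rw [← coeIdeal_le_coeIdeal (FractionRing R), hC, FractionalIdeal.mul_le]
    constructor
    · intro h
      push Not at h
      obtain ⟨i, hi, y, hy, hiy⟩ := h
      obtain ⟨i, hi', rfl⟩ := (mem_coeIdeal _).1 hi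
      rw [mem_one_div_iff hI] at hy
      obtain ⟨r, hr⟩ := hy i hi'
      refine ⟨y, hy, i, hi', r, fun hrM => hiy ?_, hr.symm⟩
      rw [mul_comm, ← hr]
      exact mem_coeIdeal_of_mem _ hrM
    · rintro ⟨y, hy, i, hi, r, hr, he⟩ h
      have := h _ (mem_coeIdeal_of_mem _ hi) y ((mem_one_div_iff hI).2 hy)
      rw [mul_comm, he] at this
      obtain ⟨r', hr', he'⟩ := (mem_coeIdeal _).1 this
      exact hr (IsFractionRing.injective R (FractionRing R) he' ▸ hr')
  simp only [← hCM]
  rw [IsTInvertible, ← hC]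
  constructor
  · rintro ⟨-, h⟩ M hM hle
    have h1 : (1 : FractionRing R) ∈ tOp (C : FracId R) := by
      rw [h]
      exact one_mem_one _
    obtain ⟨J, hJ, -, hfg, hx⟩ := (mem_tOp_iff hC0).1 h1
    exact hM.isTProper J (hJ.trans hle) hfg fun y hy => by simpa using hx y hy
  · intro h
    refine ⟨hI, le_antisymm (fun x hx => ?_) fun x hx => ?_⟩
    · obtain ⟨J, hJ, -, hfg, hx⟩ := (mem_tOp_iff hC0).1 hx
      refine mem_one_iff_memIntegral.2 ?_
      simpa using hx 1 fun j _ => by rw [one_mul]; exact memIntegral_algebraMap j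
    · obtain ⟨J, hJ, hfg, htriv⟩ := exists_hasTrivialInverse_of_forall_not_le hC0 h
      obtain ⟨a, ha, ha0⟩ := Submodule.exists_mem_ne_zero_of_ne_bot hC0
      refine (mem_tOp_iff hC0).2 ⟨J ⊔ Ideal.span {a},
        sup_le hJ ((Ideal.span_singleton_le_iff_mem _).2 ha), ?_,
        Submodule.FG.sup hfg ⟨{a}, by simp⟩, fun y hy => ?_⟩
      · intro h
        exact ha0 (by simpa using (h ▸ le_sup_right : Ideal.span {a} ≤ ⊥))
      · exact (mem_one_iff_memIntegral.1 hx).mul (htriv y (hy.mono le_sup_left))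

theorem memIntegral_of_forall_isMaxTIdeal {x : FractionRing R}
    (h : ∀ M, IsMaxTIdeal M → MemLocalizationAt M x) : MemIntegral x := by
  obtain ⟨a, b, hb, hx⟩ := IsFractionRing.div_surjective (A := R) x
  let C : Ideal R :=
    { carrier := {r | MemIntegral (x * algebraMap R (FractionRing R) r)}
      add_mem' := fun ha hb => by
        simp only [Set.mem_ofPred_eq, map_add, mul_add] at *
        exact ha.add hb
      zero_mem' := by simpa using memIntegral_algebraMap (0 : R)
      smul_mem' := fun c r hr => by
        simp only [Set.mem_ofPred_eq, smul_eq_mul, map_mul, mul_left_comm x] at *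
        exact (memIntegral_algebraMap c).mul hr }
  have hC0 : C ≠ ⊥ := by
    refine (Submodule.ne_bot_iff _).2 ⟨b, ?_, nonZeroDivisors.ne_zero hb⟩
    change MemIntegral _
    rw [← hx, div_mul_cancel₀ _ (IsFractionRing.to_map_ne_zero_of_mem_nonZeroDivisors hb)]
    exact memIntegral_algebraMap a
  obtain ⟨J, hJ, -, htriv⟩ := exists_hasTrivialInverse_of_forall_not_le hC0 fun M hM hle => by
    obtain ⟨r, s, hs, he⟩ := h M hM
    refine hs (hle ?_)
    change MemIntegral _
    rw [mul_comm, he]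
    exact memIntegral_algebraMap r
  exact htriv x fun j hj => hJ hj

end Closure

section Divisibility

variable {R : Type*} [CommRing R]

/-- `a` divides `b` in the localization of `R` at `P`. -/
def DivAt (P : Ideal R) (a b : R) : Prop := ∃ s ∉ P, a ∣ s * b

theorem divAt_of_mul_notMem {M : Ideal R} {y : FractionRing R} {a b r : R}
    (ha : y * algebraMap R (FractionRing R) a = algebraMap R (FractionRing R) r) (hr : r ∉ M)
    (hb : MemIntegral (y * algebraMap R (FractionRing R) b)) : DivAt M a b := by
  obtain ⟨t, ht⟩ := hb
  refine ⟨r, hr, t, IsFractionRing.injective R (FractionRing R) ?_⟩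
  rw [map_mul, map_mul, ← ha, ht]
  ring

theorem algebraMap_localization_dvd_iff {P : Ideal R} [hP : P.IsPrime] {a b : R} :
    algebraMap R (Localization P.primeCompl) a ∣ algebraMap R (Localization P.primeCompl) b ↔
      DivAt P a b := by
  constructor
  · rintro ⟨z, hz⟩
    obtain ⟨⟨c, s⟩, hc⟩ := IsLocalization.surj P.primeCompl z
    have : algebraMap R (Localization P.primeCompl) (b * s) = algebraMap R _ (a * c) := by
      rw [map_mul, map_mul, hz, mul_assoc, hc]
    obtain ⟨t, ht⟩ := (IsLocalization.eq_iff_exists P.primeCompl _).1 this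
    refine ⟨t * s, hP.mul_notMem t.2 s.2, t * c, ?_⟩
    linear_combination ht
  · rintro ⟨s, hs, h⟩
    have hu : IsUnit (algebraMap R (Localization P.primeCompl) s) :=
      IsLocalization.map_units _ (⟨s, hs⟩ : P.primeCompl)
    have := map_dvd (algebraMap R (Localization P.primeCompl)) h
    rwa [map_mul, hu.dvd_mul_left] at this

theorem exists_associated_algebraMap_localization (S : Submonoid R) (z : Localization S) :
    ∃ a : R, Associated z (algebraMap R (Localization S) a) := by
  obtain ⟨⟨a, s⟩, ha⟩ := IsLocalization.surj S z
  exact ⟨a, (IsLocalization.map_units _ s).unit, ha⟩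

theorem isValuationDomain_localization_iff [IsDomain R] {P : Ideal R} [hP : P.IsPrime] :
    IsValuationDomain (Localization P.primeCompl) ↔ ∀ a b, DivAt P a b ∨ DivAt P b a := by
  constructor
  · rintro ⟨-, h⟩ a b
    simpa only [algebraMap_localization_dvd_iff] using
      h (algebraMap R _ a) (algebraMap R _ b)
  · refine fun h => ⟨IsLocalization.isDomain_localization P.primeCompl_le_nonZeroDivisors,
      fun z w => ?_⟩
    obtain ⟨a, ha⟩ := exists_associated_algebraMap_localization _ z
    obtain ⟨b, hb⟩ := exists_associated_algebraMap_localization _ w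
    rw [ha.dvd_iff_dvd_left, hb.dvd_iff_dvd_right, hb.dvd_iff_dvd_left, ha.dvd_iff_dvd_right,
      algebraMap_localization_dvd_iff, algebraMap_localization_dvd_iff]
    exact h a b

/-- If all pairs generating an ideal containing `x` are comparable under divisibility, and every
nonzero element divides a power of the nonunit `x`, then divisibility is a total order. -/
theorem dvd_total_of_dvd_pow {A : Type*} [CommRing A] [IsDomain A] {x : A} (hx0 : x ≠ 0)
    (hxu : ¬ IsUnit x) (h1 : ∀ a b c d : A, x = a * c + b * d → a ∣ b ∨ b ∣ a)
    (h2 : ∀ a : A, a ≠ 0 → ∃ n : ℕ, a ∣ x ^ n) (a b : A) : a ∣ b ∨ b ∣ a := by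
  have split : ∀ a : A, a ≠ 0 → ∃ k a', a = x ^ k * a' ∧ a' ∣ x := by
    intro a ha
    obtain ⟨n, hn⟩ := h2 a ha
    have hex : ∃ m, ¬ x ^ m ∣ a := by
      refine ⟨n + 1, fun h => hxu ?_⟩
      have : x ^ n * x ∣ x ^ n * 1 := by simpa [pow_succ] using h.trans hn
      exact isUnit_of_dvd_one ((mul_dvd_mul_iff_left (pow_ne_zero n hx0)).1 this)
    classical
    obtain ⟨k, hk⟩ : ∃ k, Nat.find hex = k + 1 :=
      Nat.exists_eq_succ_of_ne_zero fun h => Nat.find_spec hex (by simp [h])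
    obtain ⟨a', rfl⟩ : x ^ k ∣ a := not_not.1 (Nat.find_min hex (by omega))
    refine ⟨k, a', rfl, (h1 x a' 1 0 (by ring)).resolve_left fun h => ?_⟩
    refine Nat.find_spec hex ?_
    rw [hk, pow_succ]
    exact mul_dvd_mul_left _ h
  rcases eq_or_ne a 0 with rfl | ha
  · exact Or.inr (dvd_zero b)
  rcases eq_or_ne b 0 with rfl | hb
  · exact Or.inl (dvd_zero a)
  obtain ⟨k, a, rfl, hax⟩ := split a ha
  obtain ⟨l, b, rfl, hbx⟩ := split b hb
  have lt : ∀ {k l : ℕ} {a b : A}, k < l → a ∣ x → x ^ k * a ∣ x ^ l * b := by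
    intro k l a b hkl hax
    obtain ⟨m, rfl⟩ := Nat.exists_eq_add_of_lt hkl
    rw [pow_succ, pow_add, mul_assoc, mul_assoc]
    exact mul_dvd_mul_left _ ((hax.mul_right b).mul_left _)
  rcases lt_trichotomy k l with h | rfl | h
  · exact Or.inl (lt h hax)
  · obtain ⟨c, hc⟩ := hax
    exact (h1 a b c 0 (by rw [← hc]; ring)).imp (mul_dvd_mul_left _) (mul_dvd_mul_left _)
  · exact Or.inr (lt h hbx)

theorem HeightOnePrime.divAt_pow {M : Ideal R} (hM : HeightOnePrime M) {a x : R} (ha : a ≠ 0)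
    (hx : x ∈ M) : ∃ n : ℕ, DivAt M a (x ^ n) := by
  have hp := hM.1
  by_contra! h
  obtain ⟨Q, hQ, haQ, hdis⟩ := Ideal.exists_le_prime_disjoint (Ideal.span {a})
    (M.primeCompl ⊔ Submonoid.powers x) (by
      rw [Set.disjoint_left]
      intro z hz hz'
      obtain ⟨s, hs, t, ⟨n, rfl⟩, rfl⟩ := Submonoid.mem_sup.1 hz'
      exact h n ⟨s, hs, Ideal.mem_span_singleton.1 hz⟩)
  rw [Set.disjoint_left] at hdis
  have hQM : Q ≤ M := fun z hz => by
    by_contra hzM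
    exact hdis hz ((le_sup_left : M.primeCompl ≤ _) hzM)
  have hxQ : x ∉ Q := fun hxQ =>
    hdis hxQ ((le_sup_right : Submonoid.powers x ≤ _) (Submonoid.mem_powers x))
  have hQ0 := hM.2.2 Q hQ (lt_of_le_of_ne hQM fun h => hxQ (h ▸ hx))
  subst hQ0
  exact ha ((Ideal.span_singleton_le_iff_mem _).1 haQ)

theorem exists_divAt_generator {P : Ideal R} (hP : P.IsPrime)
    (h : ∀ a b, DivAt P a b ∨ DivAt P b a) {J : Ideal R} (hJ : J.FG) :
    ∃ a ∈ J, ∃ s ∉ P, ∀ j ∈ J, a ∣ s * j := by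
  induction J, hJ using Submodule.fg_induction with
  | singleton x =>
    refine ⟨x, Submodule.mem_span_singleton_self x, 1, hP.one_notMem, fun j hj => ?_⟩
    rw [one_mul]
    exact Ideal.mem_span_singleton.1 hj
  | sup J₁ J₂ _ _ h₁ h₂ =>
    obtain ⟨a, ha, s, hs, has⟩ := h₁
    obtain ⟨b, hb, t, ht, hbt⟩ := h₂
    rcases h a b with ⟨u, hu, c, hc⟩ | ⟨u, hu, c, hc⟩
    · refine ⟨a, Ideal.mem_sup_left ha, u * s * t,
        hP.mul_notMem (hP.mul_notMem hu hs) ht, fun j hj => ?_⟩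
      obtain ⟨j₁, hj₁, j₂, hj₂, rfl⟩ := Submodule.mem_sup.1 hj
      obtain ⟨d, hd⟩ := has j₁ hj₁
      obtain ⟨e, he⟩ := hbt j₂ hj₂
      exact ⟨u * t * d + s * c * e, by
        linear_combination u * t * hd + s * u * he + s * e * hc⟩
    · refine ⟨b, Ideal.mem_sup_right hb, u * s * t,
        hP.mul_notMem (hP.mul_notMem hu hs) ht, fun j hj => ?_⟩
      obtain ⟨j₁, hj₁, j₂, hj₂, rfl⟩ := Submodule.mem_sup.1 hj
      obtain ⟨d, hd⟩ := has j₁ hj₁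
      obtain ⟨e, he⟩ := hbt j₂ hj₂
      exact ⟨t * c * d + s * u * e, by
        linear_combination u * t * hd + s * u * he + t * d * hc⟩

end Divisibility

section Krull

variable {R : Type*} [CommRing R] [IsDomain R]

theorem ne_zero_of_forall_divAt {I M : Ideal R} (hI : I ≠ ⊥) {x : R}
    (h : ∀ j ∈ I, DivAt M x j) : x ≠ 0 := by
  rintro rfl
  obtain ⟨j, hj, hj0⟩ := Submodule.exists_mem_ne_zero_of_ne_bot hI
  obtain ⟨s, hs, hsj⟩ := h j hj
  rcases mul_eq_zero.1 (zero_dvd_iff.1 hsj) with rfl | h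
  · exact hs M.zero_mem
  · exact hj0 h

theorem memInverse_div {J : Ideal R} {a s : R} (ha : a ≠ 0) (h : ∀ j ∈ J, a ∣ s * j) :
    MemInverse J (algebraMap R (FractionRing R) s / algebraMap R (FractionRing R) a) := by
  intro j hj
  obtain ⟨c, hc⟩ := h j hj
  refine ⟨c, ?_⟩
  rw [div_mul_eq_mul_div, ← map_mul, hc, map_mul, mul_div_cancel_left₀]
  exact (map_ne_zero_iff _ (IsFractionRing.injective R (FractionRing R))).2 ha

theorem isTProper_of_divAt_total {P : Ideal R} (hP : P.IsPrime) (h0 : P ≠ ⊥)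
    (h : ∀ a b, DivAt P a b ∨ DivAt P b a) : IsTProper P := by
  intro J hJ hfg htriv
  obtain ⟨p, hp, hp0⟩ := Submodule.exists_mem_ne_zero_of_ne_bot h0
  have hpJ : p ∈ J ⊔ Ideal.span {p} := Ideal.mem_sup_right (Ideal.mem_span_singleton_self p)
  obtain ⟨a, ha, s, hs, has⟩ := exists_divAt_generator hP h (J := J ⊔ Ideal.span {p})
    (Submodule.FG.sup hfg ⟨{p}, by simp⟩)
  have haP : a ∈ P := sup_le hJ ((Ideal.span_singleton_le_iff_mem _).2 hp) ha
  have ha0 : a ≠ 0 := ne_zero_of_forall_divAt ((Submodule.ne_bot_iff _).2 ⟨p, hpJ, hp0⟩)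
    fun j hj => ⟨s, hs, has j hj⟩
  obtain ⟨r, hr⟩ := htriv.mono le_sup_left _ (memInverse_div ha0 has)
  rw [eq_div_iff ((map_ne_zero_iff _ (IsFractionRing.injective R (FractionRing R))).2 ha0),
    ← map_mul] at hr
  exact hs (IsFractionRing.injective R (FractionRing R) hr ▸ P.mul_mem_left r haP)

theorem memLocalizationAt_of_mul {P : Ideal R} {y : FractionRing R} {i : R} (hi : i ∉ P)
    (h : MemIntegral (y * algebraMap R (FractionRing R) i)) : MemLocalizationAt P y := by
  obtain ⟨r, hr⟩ := h
  exact ⟨r, i, hi, by rw [mul_comm, hr]⟩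

theorem memLocalizationAt_of_memIntegral {P : Ideal R} (hP : P ≠ ⊤) {y : FractionRing R}
    (h : MemIntegral y) : MemLocalizationAt P y :=
  memLocalizationAt_of_mul ((Ideal.ne_top_iff_one P).1 hP) (by simpa using h)

/-- In a `t`-potent domain of `t`-dimension one, the maximal `t`-ideals have finite character. -/
theorem finite_setOf_isMaxTIdeal_mem (hpot : TPotentDomain R) (hdim : TDimensionOne R) {a : R}
    (ha : a ≠ 0) : {N : Ideal R | IsMaxTIdeal N ∧ a ∈ N}.Finite := by
  let A : Ideal R :=
    { carrier := {r | {N : Ideal R | (IsMaxTIdeal N ∧ a ∈ N) ∧ r ∉ N}.Finite}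
      add_mem' := fun {r s} hr hs => (hr.union hs).subset fun N hN => by
        by_contra hc
        simp only [Set.mem_union, Set.mem_ofPred_eq, not_or, not_and, not_not] at hc
        exact hN.2 (N.add_mem (hc.1 hN.1) (hc.2 hN.1))
      zero_mem' := by simp
      smul_mem' := fun c r hr => hr.subset fun N hN =>
        ⟨hN.1, fun h => hN.2 (N.mul_mem_left c h)⟩ }
  have hA : ∀ r, r ∈ A ↔ {N : Ideal R | (IsMaxTIdeal N ∧ a ∈ N) ∧ r ∉ N}.Finite :=
    fun r => Iff.rfl
  have haA : a ∈ A := by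
    rw [hA]
    convert Set.finite_empty
    ext N
    simp +contextual
  obtain ⟨J, hJA, ⟨T, rfl⟩, htriv⟩ := exists_hasTrivialInverse_of_forall_not_le (I := A)
    ((Submodule.ne_bot_iff _).2 ⟨a, haA, ha⟩) (fun M hM hAM => by
      have hMp := hM.isPrime
      obtain ⟨-, I, ⟨hI0, ⟨T, hT⟩, M', hM', huniq⟩, hIM⟩ := hpot M hM
      have hTM : ∀ x ∈ T, x ∈ M := fun x hx => hIM (hT ▸ Ideal.subset_span hx)
      have : ∀ x, ∃ s ∉ M, x ∈ T → ∃ n : ℕ, a ∣ s * x ^ n := by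
        intro x
        by_cases hx : x ∈ T
        · obtain ⟨n, s, hs, h⟩ := (hdim M hM).divAt_pow ha (hTM x hx)
          exact ⟨s, hs, fun _ => ⟨n, h⟩⟩
        · exact ⟨1, hMp.one_notMem, fun h => absurd h hx⟩
      choose s hsM hs using this
      have hprod : ∏ x ∈ T, s x ∉ M := fun h => by
        obtain ⟨x, hx, hxM⟩ := hMp.prod_mem_iff.1 h
        exact hsM x hxM
      refine hprod (hAM ((hA _).2 ((Set.finite_singleton M).subset ?_)))
      rintro N ⟨⟨hN, haN⟩, hsN⟩
      have hNp := hN.isPrime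
      have hIN : I ≤ N := by
        rw [← hT, Ideal.span_le]
        intro x hx
        obtain ⟨n, hn⟩ := hs x hx
        refine hNp.mem_of_pow_mem n ((hNp.mem_or_mem (N.mem_of_dvd hn haN)).resolve_left ?_)
        exact fun h => hsN (hNp.prod_mem_iff.2 ⟨x, hx, h⟩)
      exact (huniq N ⟨hN, hIN⟩).trans (huniq M ⟨hM, hIM⟩).symm)
  refine (Set.Finite.biUnion T.finite_toSet fun t ht =>
    (hA t).1 (hJA (Ideal.subset_span ht))).subset ?_
  intro N hN
  by_contra hc
  simp only [Set.mem_iUnion, Set.mem_ofPred_eq, not_exists, not_and, not_not] at hc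
  exact hN.1.isTProper _ (Ideal.span_le.2 fun t ht => hc t ht hN) ⟨T, rfl⟩ htriv

theorem generalizedKrullDomain_of_divAt_total (hpot : TPotentDomain R) (hdim : TDimensionOne R)
    (h : ∀ M : Ideal R, IsMaxTIdeal M → ∀ a b, DivAt M a b ∨ DivAt M b a) :
    GeneralizedKrullDomain R := by
  refine ⟨{M | IsMaxTIdeal M}, fun M hM => ⟨hM.isPrime, hdim M hM, ?_⟩, fun x => ⟨fun hx =>
    memIntegral_of_forall_isMaxTIdeal hx, fun hx M hM => memLocalizationAt_of_memIntegral hM.1 hx⟩,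
    fun a ha => finite_setOf_isMaxTIdeal_mem hpot hdim ha⟩
  have := hM.isPrime
  exact isValuationDomain_localization_iff.2 (h M hM)

theorem IsTPotent.isTSuperPotent {M : Ideal R} (hM : IsTPotent M) (hpvmd : IsPvMD R) :
    IsTSuperPotent M := by
  obtain ⟨hM, I, hI, hIM⟩ := hM
  exact ⟨hM, I, ⟨hI, fun J hJ hIJ =>
    hpvmd J (fun h => hI.1 (eq_bot_iff.2 (h ▸ hIJ))) hJ⟩, hIM⟩

theorem IsPvMD.divAt_total (hpvmd : IsPvMD R) {M : Ideal R} (hM : IsMaxTIdeal M) (a b : R) :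
    DivAt M a b ∨ DivAt M b a := by
  have hMp := hM.isPrime
  by_cases h0 : Ideal.span {a, b} = ⊥
  · obtain ⟨rfl, rfl⟩ : a = 0 ∧ b = 0 := by simpa [Ideal.span_eq_bot] using h0
    exact Or.inl ⟨1, hMp.one_notMem, by simp⟩
  obtain ⟨y, hy, i, hi, r, hr, he⟩ :=
    (isTInvertible_iff h0).1 (hpvmd _ h0 (Submodule.fg_span (Set.toFinite _))) M hM
  obtain ⟨c, d, rfl⟩ := Ideal.mem_span_pair.1 hi
  obtain ⟨ra, hra⟩ := hy a (Ideal.subset_span (by simp))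
  obtain ⟨rb, hrb⟩ := hy b (Ideal.subset_span (by simp))
  by_cases haM : ra ∈ M
  · by_cases hbM : rb ∈ M
    · refine absurd (M.add_mem (M.mul_mem_left c haM) (M.mul_mem_left d hbM)) fun h => hr ?_
      convert h
      apply IsFractionRing.injective R (FractionRing R)
      rw [← he]
      simp only [map_add, map_mul, hra, hrb]
      ring
    · exact Or.inr (divAt_of_mul_notMem hrb.symm hbM ⟨ra, hra⟩)
  · exact Or.inl (divAt_of_mul_notMem hra.symm haM ⟨rb, hrb⟩)

/-- A super rigid ideal is principal locally at `M`, generated by an element which makes any two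
elements generating a larger ideal locally comparable. -/
theorem IsTSuperRigid.exists_divAt {I M : Ideal R} (hI : IsTSuperRigid I) (hM : IsMaxTIdeal M) :
    ∃ x ∈ I, (∃ y, MemInverse I y ∧ ∃ r ∉ M,
        y * algebraMap R (FractionRing R) x = algebraMap R (FractionRing R) r) ∧
      (∀ j ∈ I, DivAt M x j) ∧
      ∀ a b s : R, s ∉ M → s * x ∈ Ideal.span {a, b} → DivAt M a b ∨ DivAt M b a := by
  have hMp := hM.isPrime
  obtain ⟨y, hy, x, hx, r, hr, he⟩ :=
    (isTInvertible_iff hI.1.1).1 (hI.2 I hI.1.2.1 le_rfl) M hM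
  have hdiv : ∀ j ∈ I, DivAt M x j := fun j hj => divAt_of_mul_notMem he hr (hy j hj)
  refine ⟨x, hx, ⟨y, hy, r, hr, he⟩, hdiv, fun a b s hs hsx => ?_⟩
  have hle : I ≤ I ⊔ Ideal.span {a, b} := le_sup_left
  obtain ⟨z, hz, i, hi, t, ht, hzt⟩ := (isTInvertible_iff
    (fun h => hI.1.1 (eq_bot_iff.2 (h ▸ hle)))).1
    (hI.2 _ (Submodule.FG.sup hI.1.2.1 (Submodule.fg_span (Set.toFinite _))) hle) M hM
  obtain ⟨ra, hra⟩ := hz a (Ideal.mem_sup_right (Ideal.subset_span (by simp)))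
  obtain ⟨rb, hrb⟩ := hz b (Ideal.mem_sup_right (Ideal.subset_span (by simp)))
  by_cases haM : ra ∈ M
  · by_cases hbM : rb ∈ M
    · have hspan : ∀ k ∈ Ideal.span {a, b}, ∀ q : R,
          z * algebraMap R (FractionRing R) k = algebraMap R (FractionRing R) q → q ∈ M := by
        intro k hk q hq
        obtain ⟨c, d, rfl⟩ := Ideal.mem_span_pair.1 hk
        convert M.add_mem (M.mul_mem_left c haM) (M.mul_mem_left d hbM)
        apply IsFractionRing.injective R (FractionRing R)
        rw [← hq]
        simp only [map_add, map_mul, hra, hrb]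
        ring
      obtain ⟨i₁, hi₁, i₂, hi₂, rfl⟩ := Submodule.mem_sup.1 hi
      obtain ⟨q₁, hq₁⟩ := hz i₁ (Ideal.mem_sup_left hi₁)
      obtain ⟨q₂, hq₂⟩ := hz i₂ (Ideal.mem_sup_right hi₂)
      obtain ⟨u, hu, c, hc⟩ := hdiv i₁ hi₁
      have h1 : u * s * q₁ ∈ M := by
        refine hspan (c * (s * x)) (Ideal.mul_mem_left _ c hsx) _ ?_
        simp only [map_mul, hq₁]
        have := congrArg (algebraMap R (FractionRing R)) hc
        simp only [map_mul] at this
        linear_combination -z * algebraMap R (FractionRing R) s * this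
      have h1' : q₁ ∈ M := (hMp.mem_or_mem h1).resolve_left (hMp.mul_notMem hu hs)
      refine absurd (M.add_mem h1' (hspan i₂ hi₂ q₂ hq₂.symm)) fun h => ht ?_
      convert h
      apply IsFractionRing.injective R (FractionRing R)
      rw [← hzt, map_add, map_add, hq₁, hq₂, mul_add]
    · exact Or.inr (divAt_of_mul_notMem hrb.symm hbM ⟨ra, hra⟩)
  · exact Or.inl (divAt_of_mul_notMem hra.symm haM ⟨rb, hrb⟩)

theorem IsTSuperPotent.divAt_total {M : Ideal R} (hM : IsTSuperPotent M)
    (hone : HeightOnePrime M) (a b : R) : DivAt M a b ∨ DivAt M b a := by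
  obtain ⟨hM, I, hI, hIM⟩ := hM
  have hMp := hM.isPrime
  obtain ⟨x, hxI, -, hdiv, hcomp⟩ := hI.exists_divAt hM
  have hx0 := ne_zero_of_forall_divAt hI.1.1 hdiv
  have hle := M.primeCompl_le_nonZeroDivisors
  have : IsDomain (Localization M.primeCompl) := IsLocalization.isDomain_localization hle
  have hinj := IsLocalization.injective (Localization M.primeCompl) hle
  rw [← algebraMap_localization_dvd_iff, ← algebraMap_localization_dvd_iff]
  refine dvd_total_of_dvd_pow (x := algebraMap R (Localization M.primeCompl) x)
    ((map_ne_zero_iff _ hinj).2 hx0) (fun hu => ?_) (fun z w c d hzw => ?_) (fun z hz => ?_) _ _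
  · have := hu.dvd (a := algebraMap R _ 1)
    obtain ⟨s, hs, h⟩ := algebraMap_localization_dvd_iff.1 this
    exact hs (by simpa using M.mem_of_dvd h (hIM hxI))
  · obtain ⟨a, ha⟩ := exists_associated_algebraMap_localization _ z
    obtain ⟨b, hb⟩ := exists_associated_algebraMap_localization _ w
    rw [ha.dvd_iff_dvd_left, hb.dvd_iff_dvd_right, hb.dvd_iff_dvd_left, ha.dvd_iff_dvd_right,
      algebraMap_localization_dvd_iff, algebraMap_localization_dvd_iff]
    have hmem : algebraMap R (Localization M.primeCompl) x ∈
        (Ideal.span {a, b}).map (algebraMap R (Localization M.primeCompl)) := by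
      rw [hzw]
      refine Ideal.add_mem _ (Ideal.mul_mem_right _ _ (Ideal.mem_of_dvd _ ha.symm.dvd ?_))
        (Ideal.mul_mem_right _ _ (Ideal.mem_of_dvd _ hb.symm.dvd ?_))
      · exact Ideal.mem_map_of_mem _ (Ideal.subset_span (by simp))
      · exact Ideal.mem_map_of_mem _ (Ideal.subset_span (by simp))
    obtain ⟨s, hs, hsx⟩ :=
      (IsLocalization.algebraMap_mem_map_algebraMap_iff M.primeCompl _ _ x).1 hmem
    exact hcomp a b s hs hsx
  · obtain ⟨a, ha⟩ := exists_associated_algebraMap_localization _ z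
    have ha0 : a ≠ 0 := by
      rintro rfl
      rw [map_zero, associated_zero_iff_eq_zero] at ha
      exact hz ha
    obtain ⟨n, hn⟩ := hone.divAt_pow ha0 (hIM hxI)
    refine ⟨n, ?_⟩
    rw [ha.dvd_iff_dvd_left, ← map_pow]
    exact algebraMap_localization_dvd_iff.2 hn

theorem IsTSuperPotent.isTPotent {M : Ideal R} (hM : IsTSuperPotent M) : IsTPotent M :=
  ⟨hM.1, hM.2.imp fun _ h => ⟨h.1.1, h.2⟩⟩

theorem GeneralizedKrullDomain.essentialDomain (h : GeneralizedKrullDomain R) :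
    EssentialDomain R := by
  obtain ⟨𝓟, hval, hint, -⟩ := h
  exact ⟨𝓟, fun P hP => (hval P hP).imp fun _ h => h.2, hint⟩

theorem GeneralizedKrullDomain.tPotent_isPvMD_tDimensionOne (h : GeneralizedKrullDomain R) :
    TPotentDomain R ∧ IsPvMD R ∧ TDimensionOne R := by
  obtain ⟨𝓟, hval, hint, hfin⟩ := h
  have htot : ∀ P ∈ 𝓟, ∀ a b, DivAt P a b ∨ DivAt P b a := fun P hP => by
    obtain ⟨hp, -, hv⟩ := hval P hP
    exact isValuationDomain_localization_iff.1 hv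
  have hone : ∀ P ∈ 𝓟, HeightOnePrime P := fun P hP => by
    obtain ⟨-, h1, -⟩ := hval P hP
    exact h1
  have hprop : ∀ P ∈ 𝓟, IsTProper P := fun P hP =>
    isTProper_of_divAt_total (hone P hP).1 (hone P hP).2.1 (htot P hP)
  have avoid : ∀ (F : Set (Ideal R)), F ⊆ 𝓟 → F.Finite → ∀ I : Ideal R, (∀ P ∈ F, ¬ I ≤ P) →
      ∃ b ∈ I, ∀ P ∈ F, b ∉ P := by
    intro F hF hFf I hI
    have := mt (Ideal.subset_union_prime_finite hFf (f := id) ⊤ ⊤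
      (fun P hP _ _ => (hone P (hF hP)).1) (I := I)).1 (by simpa using hI)
    obtain ⟨b, hb, hbF⟩ := Set.not_subset.1 this
    exact ⟨b, hb, fun P hP hbP => hbF (Set.mem_biUnion hP hbP)⟩
  have cover : ∀ I : Ideal R, I ≠ ⊥ → IsTProper I → ∃ P ∈ 𝓟, I ≤ P := by
    intro I h0 hI
    by_contra! hc
    obtain ⟨a, ha, ha0⟩ := Submodule.exists_mem_ne_zero_of_ne_bot h0
    obtain ⟨b, hb, hbP⟩ := avoid _ (fun P hP => hP.1) (hfin a ha0) I fun P hP => hc P hP.1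
    refine hI (Ideal.span {a, b}) (Ideal.span_le.2 ?_) (Submodule.fg_span (Set.toFinite _))
      fun y hy => (hint y).1 fun P hP => ?_
    · rintro z (rfl | rfl) <;> assumption
    · by_cases haP : a ∈ P
      · exact memLocalizationAt_of_mul (hbP P ⟨hP, haP⟩) (hy b (Ideal.subset_span (by simp)))
      · exact memLocalizationAt_of_mul haP (hy a (Ideal.subset_span (by simp)))
  have hmax : ∀ M, IsMaxTIdeal M → M ∈ 𝓟 := by
    intro M hM
    obtain ⟨P, hP, hMP⟩ := cover M hM.ne_bot hM.isTProper
    rwa [hM.eq_of_le (hprop P hP) hMP]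
  refine ⟨fun M hM => ⟨hM, ?_⟩, fun I h0 hfg => (isTInvertible_iff h0).2 fun M hM => ?_,
    fun M hM => hone M (hmax M hM)⟩
  · obtain ⟨a, ha, ha0⟩ := Submodule.exists_mem_ne_zero_of_ne_bot hM.ne_bot
    obtain ⟨b, hb, hbP⟩ := avoid ({P | P ∈ 𝓟 ∧ a ∈ P} \ {M}) (fun P hP => hP.1.1)
      ((hfin a ha0).subset Set.sdiff_subset) M
      fun P hP hle => hP.2 (hM.eq_of_le (hprop P hP.1.1) hle).symm
    have hle : Ideal.span {a, b} ≤ M :=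
      Ideal.span_le.2 (by rintro z (rfl | rfl) <;> assumption)
    refine ⟨Ideal.span {a, b}, ⟨(Submodule.ne_bot_iff _).2
      ⟨a, Ideal.subset_span (by simp), ha0⟩, Submodule.fg_span (Set.toFinite _),
      M, ⟨hM, hle⟩, fun N hN => ?_⟩, hle⟩
    by_contra hne
    exact hbP N ⟨⟨hmax N hN.1, hN.2 (Ideal.subset_span (by simp))⟩, hne⟩
      (hN.2 (Ideal.subset_span (by simp)))
  · obtain ⟨a, ha, s, hs, has⟩ := exists_divAt_generator hM.isPrime (htot M (hmax M hM)) hfg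
    have ha0 := ne_zero_of_forall_divAt h0 fun j hj => ⟨s, hs, has j hj⟩
    have ha0' : algebraMap R (FractionRing R) a ≠ 0 :=
      (map_ne_zero_iff _ (IsFractionRing.injective R (FractionRing R))).2 ha0
    exact ⟨_, memInverse_div ha0 has, a, ha, s, hs, div_mul_cancel₀ _ ha0'⟩

theorem EssentialDomain.generalizedKrullDomain (hess : EssentialDomain R)
    (hpot : TPotentDomain R) (hdim : TDimensionOne R) : GeneralizedKrullDomain R := by
  obtain ⟨𝓟, hval, hint⟩ := hess
  refine generalizedKrullDomain_of_divAt_total hpot hdim fun M hM => ?_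
  obtain ⟨-, I, ⟨hI0, hfg, M', hM', huniq⟩, hIM⟩ := hpot M hM
  suffices hMP : M ∈ 𝓟 by
    obtain ⟨hp, hv⟩ := hval M hMP
    exact isValuationDomain_localization_iff.1 hv
  by_contra hMP
  refine hM.isTProper I hIM hfg fun y hy => (hint y).1 fun P hP => ?_
  obtain ⟨i, hi, hiP⟩ : ∃ i ∈ I, i ∉ P := by
    by_contra! hIP
    obtain ⟨hp, hv⟩ := hval P hP
    have hP0 : P ≠ ⊥ := fun h => hI0 (eq_bot_iff.2 (h ▸ hIP))
    obtain ⟨N, hN, hPN⟩ := (isTProper_of_divAt_total hp hP0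
      (isValuationDomain_localization_iff.1 hv)).exists_le_isMaxTIdeal hP0
    have hNM : N = M :=
      (huniq N ⟨hN, le_trans hIP hPN⟩).trans (huniq M ⟨hM, hIM⟩).symm
    subst hNM
    rcases hPN.eq_or_lt with rfl | hlt
    · exact hMP hP
    · exact hP0 ((hdim N hN).2.2 P hp hlt)
  exact memLocalizationAt_of_mul hiP (hy i hi)

theorem GeneralizedKrullDomain.completelyIntegrallyClosed (h : GeneralizedKrullDomain R) :
    CompletelyIntegrallyClosed R := by
  obtain ⟨𝓟, hval, hint, -⟩ := h
  intro a u ha hu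
  refine (hint u).1 fun P hP => ?_
  obtain ⟨hp, hone, hv⟩ := hval P hP
  have hinj := IsFractionRing.injective R (FractionRing R)
  obtain ⟨p, q, hq, rfl⟩ := IsFractionRing.div_surjective (A := R) u
  have hq0 : algebraMap R (FractionRing R) q ≠ 0 :=
    IsFractionRing.to_map_ne_zero_of_mem_nonZeroDivisors hq
  set u := algebraMap R (FractionRing R) p / algebraMap R (FractionRing R) q with hu_def
  have hpq : u * algebraMap R (FractionRing R) q = algebraMap R (FractionRing R) p :=
    div_mul_cancel₀ _ hq0
  rcases isValuationDomain_localization_iff.1 hv q p with ⟨s, hs, r, hr⟩ | ⟨s, hs, r, hr⟩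
  · refine memLocalizationAt_of_mul hs ⟨r, mul_right_cancel₀ hq0 ?_⟩
    have := congrArg (algebraMap R (FractionRing R)) hr
    simp only [map_mul] at this
    linear_combination -this - algebraMap R (FractionRing R) s * hpq
  · have hsu : algebraMap R (FractionRing R) s = u * algebraMap R (FractionRing R) r := by
      refine mul_right_cancel₀ hq0 ?_
      have := congrArg (algebraMap R (FractionRing R)) hr
      simp only [map_mul] at this
      linear_combination this - algebraMap R (FractionRing R) r * hpq
    by_cases hrP : r ∈ P
    · exfalso
      obtain ⟨n, t, ht, c, hc⟩ := hone.divAt_pow ha hrP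
      obtain ⟨k, hk⟩ := hu (n + 1) n.succ_pos
      have key : s ^ (n + 1) * t = k * r * c := by
        apply hinj
        have hc' := congrArg (algebraMap R (FractionRing R)) hc
        simp only [map_mul, map_pow] at hc' ⊢
        rw [hsu, ← hk]
        linear_combination u ^ (n + 1) * algebraMap R (FractionRing R) r * hc'
      have : s ^ (n + 1) * t ∈ P := by
        rw [key]
        exact P.mul_mem_right _ (P.mul_mem_left _ hrP)
      rcases hp.mem_or_mem this with h | h
      · exact hs (hp.mem_of_pow_mem _ h)
      · exact ht h
    · exact memLocalizationAt_of_mul hrP ⟨s, hsu⟩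

theorem CompletelyIntegrallyClosed.tDimensionOne (hcic : CompletelyIntegrallyClosed R)
    (hsp : TSuperPotentDomain R) : TDimensionOne R := by
  intro M hM
  have hMp := hM.isPrime
  refine ⟨hMp, hM.ne_bot, fun P hP hPM => ?_⟩
  by_contra hP0
  obtain ⟨a, haP, ha0⟩ := Submodule.exists_mem_ne_zero_of_ne_bot hP0
  obtain ⟨v, hvM, hvP⟩ := Set.exists_of_ssubset hPM
  obtain ⟨-, I₀, ⟨⟨hI0, hfg, M', hM', huniq⟩, hinv⟩, hIM⟩ := hsp M hM
  obtain rfl : M = M' := huniq M ⟨hM, hIM⟩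
  have hle : I₀ ≤ I₀ ⊔ Ideal.span {v} := le_sup_left
  have hIM' : I₀ ⊔ Ideal.span {v} ≤ M :=
    sup_le hIM ((Ideal.span_singleton_le_iff_mem _).2 hvM)
  have hfg' : (I₀ ⊔ Ideal.span {v}).FG := Submodule.FG.sup hfg ⟨{v}, by simp⟩
  have hvI : v ∈ I₀ ⊔ Ideal.span {v} := Ideal.mem_sup_right (Ideal.mem_span_singleton_self v)
  have hI : IsTSuperRigid (I₀ ⊔ Ideal.span {v}) :=
    ⟨⟨fun h => hI0 (eq_bot_iff.2 (h ▸ hle)), hfg', M, ⟨hM, hIM'⟩,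
      fun N hN => huniq N ⟨hN.1, hle.trans hN.2⟩⟩, fun J hJ hJI => hinv J hJ (hle.trans hJI)⟩
  generalize I₀ ⊔ Ideal.span {v} = I at hle hIM' hfg' hvI hI
  obtain ⟨x, hxI, -, hdiv, hcomp⟩ := hI.exists_divAt hM
  have hxP : x ∉ P := fun h => by
    obtain ⟨s, hs, hsv⟩ := hdiv v hvI
    rcases hP.mem_or_mem (P.mem_of_dvd hsv h) with h | h
    · exact hs (hPM.le h)
    · exact hvP h
  have hpow : ∀ n : ℕ, DivAt M (x ^ n) a := by
    intro n
    induction n with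
    | zero => exact ⟨1, hMp.one_notMem, by simp⟩
    | succ n ih =>
      obtain ⟨s, hs, c, hc⟩ := ih
      have hcP : c ∈ P := by
        have : x ^ n * c ∈ P := hc ▸ P.mul_mem_left s haP
        exact (hP.mem_or_mem this).resolve_left fun h => hxP (hP.mem_of_pow_mem n h)
      rcases hcomp x c 1 hMp.one_notMem (Ideal.mul_mem_left _ _ (Ideal.subset_span (by simp)))
        with ⟨t, ht, d, hd⟩ | ⟨t, ht, h⟩
      · exact ⟨t * s, hMp.mul_notMem ht hs, d, by linear_combination t * hc + x ^ n * hd⟩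
      · rcases hP.mem_or_mem (P.mem_of_dvd h hcP) with h | h
        · exact absurd (hPM.le h) ht
        · exact absurd h hxP
  refine hM.isTProper I hIM' hfg' fun y hy => hcic a y ha0 fun n _ => ?_
  obtain ⟨r, hr⟩ : MemIntegral (algebraMap R (FractionRing R) a * y ^ n) := by
    refine memIntegral_of_forall_isMaxTIdeal fun N hN => ?_
    by_cases hNM : N = M
    · subst hNM
      obtain ⟨s, hs, c, hc⟩ := hpow n
      obtain ⟨z, hz⟩ := hy x hxI
      refine memLocalizationAt_of_mul hs ⟨z ^ n * c, ?_⟩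
      have := congrArg (algebraMap R (FractionRing R)) hc
      simp only [map_mul, map_pow] at this ⊢
      rw [hz, mul_pow]
      linear_combination -y ^ n * this
    · obtain ⟨i, hi, hiN⟩ : ∃ i ∈ I, i ∉ N := by
        by_contra! hIN
        exact hNM (huniq N ⟨hN, hle.trans hIN⟩)
      obtain ⟨z, hz⟩ := hy i hi
      refine memLocalizationAt_of_mul (i := i ^ n)
        (fun h => hiN (hN.isPrime.mem_of_pow_mem n h)) ⟨a * z ^ n, ?_⟩
      simp only [map_mul, map_pow, hz]
      ring
  exact ⟨r, hr.symm⟩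

end Krull

/-- For an integral domain `R` the following are equivalent:
(1) `R` is a generalized Krull domain;
(2) `R` is a `t`-potent essential domain of `t`-dimension one;
(3) `R` is a `t`-potent PvMD of `t`-dimension one;
(4) `R` is a completely integrally closed `t`-super potent domain;
(5) `R` is a `t`-super potent domain of `t`-dimension one. -/
theorem generalizedKrull_tfae {R : Type*} [CommRing R] [IsDomain R] :
    List.TFAE
      [GeneralizedKrullDomain R,
       TPotentDomain R ∧ EssentialDomain R ∧ TDimensionOne R,
       TPotentDomain R ∧ IsPvMD R ∧ TDimensionOne R,
       CompletelyIntegrallyClosed R ∧ TSuperPotentDomain R,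
       TSuperPotentDomain R ∧ TDimensionOne R] := by
  tfae_have 1 → 3 := fun h => h.tPotent_isPvMD_tDimensionOne
  tfae_have 3 → 2 := fun ⟨hpot, hpvmd, hdim⟩ =>
    ⟨hpot, (generalizedKrullDomain_of_divAt_total hpot hdim fun M hM =>
      hpvmd.divAt_total hM).essentialDomain, hdim⟩
  tfae_have 2 → 1 := fun ⟨hpot, hess, hdim⟩ => hess.generalizedKrullDomain hpot hdim
  tfae_have 3 → 5 := fun ⟨hpot, hpvmd, hdim⟩ =>
    ⟨fun M hM => (hpot M hM).isTSuperPotent hpvmd, hdim⟩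
  tfae_have 5 → 1 := fun ⟨hsp, hdim⟩ =>
    generalizedKrullDomain_of_divAt_total (fun M hM => (hsp M hM).isTPotent) hdim
      fun M hM => (hsp M hM).divAt_total (hdim M hM)
  tfae_have 1 → 4 := fun h => ⟨h.completelyIntegrallyClosed, fun M hM =>
    (h.tPotent_isPvMD_tDimensionOne.1 M hM).isTSuperPotent h.tPotent_isPvMD_tDimensionOne.2.1⟩
  tfae_have 4 → 5 := fun ⟨hcic, hsp⟩ => ⟨hsp, hcic.tDimensionOne hsp⟩
  tfae_finish
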